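/- For any two distinct colours c, q ∈ Fin k, the restriction of the map σ ↦ H(σ,q) to S(c,c) is a bijection from S(c,c) onto S(q,c). -/

import Mathlib

/-- The disagreement graph `Q_{σ(v),q}`: the set of vertices `x` for which there is a
path `v = w₀, …, w_t = x` in `G` all of whose vertices receive colour `σ v` or `q`. -/
def disagreeSet {V : Type*} {k : ℕ} (G : SimpleGraph V) (v : V)
    (σ : V → Fin k) (q : Fin k) : Set V :=
  {x | ∃ p : G.Walk v x, ∀ w ∈ p.support, σ w = σ v ∨ σ w = q}

open Classical in
/-- The `q`-switching `H(σ,q)`: exchange the colours `σ v` and `q` on the disagreement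
graph, leaving all other vertices unchanged. -/
noncomputable def switchColour {V : Type*} {k : ℕ} (G : SimpleGraph V) (v : V)
    (σ : V → Fin k) (q : Fin k) : V → Fin k := fun x =>
  if x ∈ disagreeSet G v σ q then
    if σ x = σ v then q else if σ x = q then σ v else σ x
  else σ x

/-- `S(c,c)`: the proper colourings with `σ v = c`, `σ u = c` whose disagreement graph
`Q_{c,q}` does not contain `u`. -/
def Scc {V : Type*} {k : ℕ} (G : SimpleGraph V) (v u : V) (c q : Fin k) :
    Set (V → Fin k) :=
  {σ | (∀ x y, G.Adj x y → σ x ≠ σ y) ∧ σ v = c ∧ σ u = c ∧ u ∉ disagreeSet G v σ q}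

/-- `S(q,c)`: the proper colourings with `σ v = q`, `σ u = c` whose disagreement graph
`Q_{q,c}` does not contain `u`. -/
def Sqc {V : Type*} {k : ℕ} (G : SimpleGraph V) (v u : V) (c q : Fin k) :
    Set (V → Fin k) :=
  {σ | (∀ x y, G.Adj x y → σ x ≠ σ y) ∧ σ v = q ∧ σ u = c ∧ u ∉ disagreeSet G v σ c}

/-!
The switching `H(·, q)` is a Kempe change: it applies the transposition of `σ v` and `q` on `Q`,
the `{σ v, q}`-coloured component of `v`. The transposition preserves `{σ v, q}`, so the vertices
with these two colours, and with them the component `Q`, stay the same, and switching back to the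
old colour of `v` undoes the change. Every neighbour of `Q` outside `Q` has a third colour, so
properness is preserved.
-/

section Switching

variable {V : Type*} {k : ℕ} {G : SimpleGraph V} {v x y : V} {σ : V → Fin k} {q : Fin k}

theorem self_mem_disagreeSet (G : SimpleGraph V) (v : V) (σ : V → Fin k) (q : Fin k) :
    v ∈ disagreeSet G v σ q :=
  ⟨.nil, by simp⟩

theorem mem_disagreeSet_of_adj (hx : x ∈ disagreeSet G v σ q) (hxy : G.Adj x y)
    (hy : σ y = σ v ∨ σ y = q) : y ∈ disagreeSet G v σ q := by
  obtain ⟨p, hp⟩ := hx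
  refine ⟨p.concat hxy, fun w hw => ?_⟩
  rw [SimpleGraph.Walk.support_concat, List.mem_append, List.mem_singleton] at hw
  rcases hw with hw | rfl
  · exact hp w hw
  · exact hy

theorem eq_or_eq_of_mem_disagreeSet (hx : x ∈ disagreeSet G v σ q) : σ x = σ v ∨ σ x = q :=
  let ⟨p, hp⟩ := hx
  hp x p.end_mem_support

theorem switchColour_of_mem (hx : x ∈ disagreeSet G v σ q) :
    switchColour G v σ q x = Equiv.swap (σ v) q (σ x) := by
  rw [switchColour, if_pos hx, Equiv.swap_apply_def]

theorem switchColour_of_notMem (hx : x ∉ disagreeSet G v σ q) :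
    switchColour G v σ q x = σ x :=
  if_neg hx

theorem switchColour_self (G : SimpleGraph V) (v : V) (σ : V → Fin k) (q : Fin k) :
    switchColour G v σ q v = q := by
  rw [switchColour_of_mem (self_mem_disagreeSet G v σ q), Equiv.swap_apply_left]

theorem switchColour_eq_or_eq_iff :
    switchColour G v σ q x = q ∨ switchColour G v σ q x = σ v ↔ σ x = σ v ∨ σ x = q := by
  by_cases hx : x ∈ disagreeSet G v σ q
  · rw [switchColour_of_mem hx, Equiv.swap_apply_eq_iff, Equiv.swap_apply_eq_iff,
      Equiv.swap_apply_right, Equiv.swap_apply_left]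
  · rw [switchColour_of_notMem hx, or_comm]

theorem disagreeSet_switchColour (G : SimpleGraph V) (v : V) (σ : V → Fin k) (q : Fin k) :
    disagreeSet G v (switchColour G v σ q) (σ v) = disagreeSet G v σ q := by
  simp only [disagreeSet, switchColour_self, switchColour_eq_or_eq_iff]

theorem switchColour_switchColour (G : SimpleGraph V) (v : V) (σ : V → Fin k) (q : Fin k) :
    switchColour G v (switchColour G v σ q) (σ v) = σ := by
  have hQ := disagreeSet_switchColour G v σ q
  funext x
  by_cases hx : x ∈ disagreeSet G v σ q
  · rw [switchColour_of_mem (hQ ▸ hx), switchColour_self, switchColour_of_mem hx,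
      Equiv.swap_comm, Equiv.swap_apply_self]
  · rw [switchColour_of_notMem (hQ ▸ hx), switchColour_of_notMem hx]

theorem switchColour_ne_of_mem_of_notMem (hxy : G.Adj x y) (hx : x ∈ disagreeSet G v σ q)
    (hy : y ∉ disagreeSet G v σ q) : switchColour G v σ q x ≠ switchColour G v σ q y := by
  intro h
  have hσy : σ y = σ v ∨ σ y = q := by
    rw [← switchColour_eq_or_eq_iff (G := G), ← h, switchColour_eq_or_eq_iff]
    exact eq_or_eq_of_mem_disagreeSet hx
  exact hy (mem_disagreeSet_of_adj hx hxy hσy)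

theorem switchColour_ne_of_adj (hσ : ∀ x y, G.Adj x y → σ x ≠ σ y) (hxy : G.Adj x y) :
    switchColour G v σ q x ≠ switchColour G v σ q y := by
  by_cases hx : x ∈ disagreeSet G v σ q <;> by_cases hy : y ∈ disagreeSet G v σ q
  · rw [switchColour_of_mem hx, switchColour_of_mem hy]
    exact (Equiv.injective _).ne (hσ x y hxy)
  · exact switchColour_ne_of_mem_of_notMem hxy hx hy
  · exact (switchColour_ne_of_mem_of_notMem hxy.symm hy hx).symm
  · rw [switchColour_of_notMem hx, switchColour_of_notMem hy]
    exact hσ x y hxy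

end Switching

section SeparatedColourings

variable {V : Type*} {k : ℕ}

/-- The proper colourings with `σ v = a` and `σ u = d` whose disagreement graph `Q_{a,b}` at `v`
does not contain `u`. With `d = c` this is `S(c,c)` for `(a, b) = (c, q)` and `S(q,c)` for
`(a, b) = (q, c)`, so that the two sides of the bijection are exchanged by swapping `a` and `b`. -/
def separatedColourings (G : SimpleGraph V) (v u : V) (a b d : Fin k) : Set (V → Fin k) :=
  {σ | (∀ x y, G.Adj x y → σ x ≠ σ y) ∧ σ v = a ∧ σ u = d ∧ u ∉ disagreeSet G v σ b}

theorem mapsTo_switchColour (G : SimpleGraph V) (v u : V) (a b d : Fin k) :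
    Set.MapsTo (fun σ => switchColour G v σ b) (separatedColourings G v u a b d)
      (separatedColourings G v u b a d) := by
  rintro σ ⟨hσ, rfl, hu, huQ⟩
  exact ⟨fun _ _ => switchColour_ne_of_adj hσ, switchColour_self G v σ b,
    (switchColour_of_notMem huQ).trans hu, by rwa [disagreeSet_switchColour]⟩

theorem leftInvOn_switchColour (G : SimpleGraph V) (v u : V) (a b d : Fin k) :
    Set.LeftInvOn (fun τ => switchColour G v τ a) (fun σ => switchColour G v σ b)
      (separatedColourings G v u a b d) := by
  rintro σ ⟨-, rfl, -, -⟩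
  exact switchColour_switchColour G v σ b

theorem stmt2_general (G : SimpleGraph V) (v u : V) (a b d : Fin k) :
    Set.BijOn (fun σ => switchColour G v σ b) (separatedColourings G v u a b d)
      (separatedColourings G v u b a d) :=
  Set.InvOn.bijOn ⟨leftInvOn_switchColour G v u a b d, leftInvOn_switchColour G v u b a d⟩
    (mapsTo_switchColour G v u a b d) (mapsTo_switchColour G v u b a d)

end SeparatedColourings

/-- for distinct colours `c q`, the map `σ ↦ H(σ,q)` restricted to `S(c,c)`
is a bijection from `S(c,c)` onto `S(q,c)`. -/
theorem stmt2 {V : Type*} [Fintype V] {k : ℕ} (hk : 0 < k)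
    (G : SimpleGraph V) (v u : V) (huv : u ≠ v) (hadj : ¬ G.Adj v u)
    (c q : Fin k) (hcq : c ≠ q) :
    Set.BijOn (fun σ => switchColour G v σ q) (Scc G v u c q) (Sqc G v u c q) :=
  stmt2_general G v u c q c
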